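/- arXiv:1907.04201 — 3 statements merged into one kernel-verified Lean document; each statement's English description precedes it below -/
import Mathlib

section
/- Let p ∈ (0,1], ρ ∈ (0,1), and let X_1, X_2, … be random variables on a probability space (Ω, ℱ, P) taking values in {0,1}, adapted to a filtration (ℱ_w)_{w≥0}, such that E[X_w | ℱ_{w−1}] ≥ p almost surely for every w ≥ 1. Then for every natural number T, ∑_{w=0}^{T} P(∑_{v=1}^{w} X_v ≤ (1−ρ) p w) ≤ 1 + 2/(ρ² p). -/
/-!
This is a Chernoff bound followed by a geometric sum. Put `S_w = ∑_{1 ≤ v ≤ w} X_v` and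
`M_w = ∏_{1 ≤ v ≤ w} (1 - ρ X_v)`; since `X_v ∈ {0,1}`, `M_w = (1 - ρ) ^ S_w`, i.e. `M_w` is the
exponential of `S_w` with the tilt `log (1 - ρ)`. Conditioning on `ℱ_w` gives
`E M_{w+1} ≤ (1 - ρ p) E M_w`, hence `E M_w ≤ (1 - ρ p) ^ w ≤ exp (-ρ p w)`
(`integral_tilt_le`). Markov's inequality and
`(1 - ρ) log (1 - ρ) ≥ -ρ + ρ² / 2` (`mul_log_bound`) then yield
`P (S_w ≤ (1 - ρ) p w) ≤ exp (-ρ² p / 2) ^ w` (`tail_bound`). Finally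
`∑_w exp (-c) ^ w ≤ 1 / (1 - exp (-c)) ≤ 1 + 1 / c` with `c = ρ² p / 2`.
-/

open MeasureTheory ProbabilityTheory Finset

/-- With `t = -log (1 - ρ) ≥ 0` this is the inequality `t ≤ sinh t`. -/
lemma mul_log_bound {ρ : ℝ} (hρ0 : 0 < ρ) (hρ1 : ρ < 1) :
    -ρ + ρ ^ 2 / 2 ≤ (1 - ρ) * Real.log (1 - ρ) := by
  have hq : 0 < 1 - ρ := by linarith
  have hlog : 0 ≤ -Real.log (1 - ρ) := by
    have := Real.log_nonpos hq.le (by linarith)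
    linarith
  have h := Real.self_le_sinh_iff.2 hlog
  rw [Real.sinh_neg, Real.sinh_log hq] at h
  have h2 := mul_le_mul_of_nonneg_left h hq.le
  have h3 : (1 - ρ) * (1 - ρ)⁻¹ = 1 := mul_inv_cancel₀ hq.ne'
  nlinarith

lemma one_sub_mul_eq_exp {ρ x : ℝ} (hρ1 : ρ < 1) (hx : x = 0 ∨ x = 1) :
    1 - ρ * x = Real.exp (Real.log (1 - ρ) * x) := by
  rcases hx with rfl | rfl
  · simp
  · rw [mul_one, mul_one, Real.exp_log (by linarith)]

lemma prod_tilt_mem {Ω : Type*} {X : ℕ → Ω → ℝ} {ρ : ℝ} (hρ0 : 0 < ρ) (hρ1 : ρ < 1)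
    (hbool : ∀ w ω, X w ω = 0 ∨ X w ω = 1) (w : ℕ) (ω : Ω) :
    0 ≤ ∏ v ∈ Finset.Icc 1 w, (1 - ρ * X v ω) ∧ ∏ v ∈ Finset.Icc 1 w, (1 - ρ * X v ω) ≤ 1 := by
  have h0 : ∀ v ∈ Finset.Icc 1 w, 0 ≤ 1 - ρ * X v ω := by
    intro v _
    rcases hbool v ω with h | h <;> rw [h] <;> linarith
  refine ⟨Finset.prod_nonneg h0, Finset.prod_le_one h0 ?_⟩
  intro v _
  rcases hbool v ω with h | h <;> rw [h] <;> linarith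

lemma measurable_prod_tilt {Ω : Type*} {m0 : MeasurableSpace Ω} {ℱ : Filtration ℕ m0}
    {X : ℕ → Ω → ℝ} (hadapted : Adapted ℱ X) (ρ : ℝ) (w : ℕ) :
    Measurable[ℱ w] (fun ω => ∏ v ∈ Finset.Icc 1 w, (1 - ρ * X v ω)) := by
  refine Finset.measurable_fun_prod _ fun v hv => ?_
  have hX : Measurable[ℱ w] (X v) :=
    (hadapted v).mono (ℱ.mono (Finset.mem_Icc.1 hv).2) le_rfl
  exact (hX.const_mul ρ).const_sub 1

lemma integrable_of_mem_unit {Ω : Type*} {m0 : MeasurableSpace Ω} {P : Measure Ω}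
    [IsProbabilityMeasure P] {f : Ω → ℝ} (hf : Measurable f)
    (h : ∀ ω, 0 ≤ f ω ∧ f ω ≤ 1) : Integrable f P := by
  refine Integrable.of_bound hf.aestronglyMeasurable 1 (Filter.Eventually.of_forall fun ω => ?_)
  rw [Real.norm_eq_abs, abs_of_nonneg (h ω).1]
  exact (h ω).2

lemma integral_tilt_le {Ω : Type*} {m0 : MeasurableSpace Ω} (P : Measure Ω)
    [IsProbabilityMeasure P] (ℱ : Filtration ℕ m0) (X : ℕ → Ω → ℝ) (hadapted : Adapted ℱ X)
    (p : ℝ) (hp1 : p ≤ 1) (ρ : ℝ) (hρ0 : 0 < ρ) (hρ1 : ρ < 1)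
    (hbool : ∀ w ω, X w ω = 0 ∨ X w ω = 1)
    (hcond : ∀ w, 1 ≤ w → (fun _ => p) ≤ᵐ[P] P[X w | ℱ (w - 1)]) (w : ℕ) :
    ∫ ω, ∏ v ∈ Finset.Icc 1 w, (1 - ρ * X v ω) ∂P ≤ (1 - ρ * p) ^ w := by
  induction w with
  | zero => simp
  | succ w ih =>
    set M : Ω → ℝ := fun ω => ∏ v ∈ Finset.Icc 1 w, (1 - ρ * X v ω) with hM
    have hMmem : ∀ ω, 0 ≤ M ω ∧ M ω ≤ 1 := prod_tilt_mem hρ0 hρ1 hbool w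
    have hMmeas : Measurable[ℱ w] M := measurable_prod_tilt hadapted ρ w
    have hMint : Integrable M P := integrable_of_mem_unit (hMmeas.mono (ℱ.le w) le_rfl) hMmem
    have hXmeas : Measurable (X (w + 1)) := (hadapted (w + 1)).mono (ℱ.le _) le_rfl
    have hXint : Integrable (X (w + 1)) P := integrable_of_mem_unit hXmeas fun ω => by
      rcases hbool (w + 1) ω with h | h <;> simp [h]
    have hMX : Integrable (M * X (w + 1)) P :=
      integrable_of_mem_unit ((hMmeas.mono (ℱ.le w) le_rfl).mul hXmeas) fun ω => by
        rcases hbool (w + 1) ω with h | h <;> simp [h, hMmem ω]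
    have hpull : P[M * X (w + 1) | ℱ w] =ᵐ[P] M * P[X (w + 1) | ℱ w] :=
      condExp_mul_of_stronglyMeasurable_left hMmeas.stronglyMeasurable hMX hXint
    have hlow : p * ∫ ω, M ω ∂P ≤ ∫ ω, (M * X (w + 1)) ω ∂P := by
      rw [← integral_condExp (ℱ.le w) (f := M * X (w + 1)), ← integral_const_mul]
      refine integral_mono_ae (hMint.const_mul p) integrable_condExp ?_
      filter_upwards [hpull, hcond (w + 1) (by omega)] with ω h1 h2
      rw [h1, mul_comm]
      exact mul_le_mul_of_nonneg_left h2 (hMmem ω).1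
    have hsplit : ∫ ω, ∏ v ∈ Finset.Icc 1 (w + 1), (1 - ρ * X v ω) ∂P
        = ∫ ω, M ω ∂P - ρ * ∫ ω, (M * X (w + 1)) ω ∂P := by
      rw [← integral_const_mul, ← integral_sub hMint (hMX.const_mul ρ)]
      refine integral_congr_ae (Filter.Eventually.of_forall fun ω => ?_)
      simp only [hM, Pi.mul_apply]
      rw [Finset.prod_Icc_succ_top (by omega)]
      ring
    have hnn : 0 ≤ 1 - ρ * p := by nlinarith
    calc _ = _ := hsplit
      _ ≤ (1 - ρ * p) * ∫ ω, M ω ∂P := by nlinarith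
      _ ≤ (1 - ρ * p) * (1 - ρ * p) ^ w := mul_le_mul_of_nonneg_left ih hnn
      _ = _ := by ring

lemma tail_bound {Ω : Type*} {m0 : MeasurableSpace Ω} (P : Measure Ω)
    [IsProbabilityMeasure P] (ℱ : Filtration ℕ m0) (X : ℕ → Ω → ℝ) (hadapted : Adapted ℱ X)
    (p : ℝ) (hp0 : 0 < p) (hp1 : p ≤ 1) (ρ : ℝ) (hρ0 : 0 < ρ) (hρ1 : ρ < 1)
    (hbool : ∀ w ω, X w ω = 0 ∨ X w ω = 1)
    (hcond : ∀ w, 1 ≤ w → (fun _ => p) ≤ᵐ[P] P[X w | ℱ (w - 1)]) (w : ℕ) :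
    (P {ω | ∑ v ∈ Finset.Icc 1 w, X v ω ≤ (1 - ρ) * p * w}).toReal
      ≤ Real.exp (-(ρ ^ 2 * p / 2)) ^ w := by
  have hL : Real.log (1 - ρ) < 0 := Real.log_neg (by linarith) (by linarith)
  -- As `log (1 - ρ) < 0`, small values of the sum are large values of the product.
  have hset : {ω | ∑ v ∈ Finset.Icc 1 w, X v ω ≤ (1 - ρ) * p * w}
      = {ω | Real.exp (Real.log (1 - ρ) * ((1 - ρ) * p * w))
          ≤ ∏ v ∈ Finset.Icc 1 w, (1 - ρ * X v ω)} := by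
    ext ω
    simp only [Set.mem_ofPred_eq]
    rw [Finset.prod_congr rfl fun v _ => one_sub_mul_eq_exp hρ1 (hbool v ω),
      ← Real.exp_sum, Real.exp_le_exp, ← Finset.mul_sum, mul_le_mul_left_of_neg hL]
  have hmem := prod_tilt_mem hρ0 hρ1 hbool w
  have hint : Integrable (fun ω => ∏ v ∈ Finset.Icc 1 w, (1 - ρ * X v ω)) P :=
    integrable_of_mem_unit ((measurable_prod_tilt hadapted ρ w).mono (ℱ.le w) le_rfl) hmem
  have hmarkov := mul_meas_ge_le_integral_of_nonneg
    (Filter.Eventually.of_forall fun ω => (hmem ω).1) hint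
    (Real.exp (Real.log (1 - ρ) * ((1 - ρ) * p * w)))
  have hE := integral_tilt_le P ℱ X hadapted p hp1 ρ hρ0 hρ1 hbool hcond w
  have hpow : (1 - ρ * p) ^ w ≤ Real.exp (w * -(ρ * p)) := by
    rw [Real.exp_nat_mul]
    refine pow_le_pow_left₀ (by nlinarith) ?_ w
    have := Real.add_one_le_exp (-(ρ * p))
    linarith
  rw [← hset] at hmarkov
  rw [← Real.exp_nat_mul]
  refine le_of_mul_le_mul_left ((hmarkov.trans (hE.trans hpow)).trans ?_) (Real.exp_pos _)
  rw [← Real.exp_add, Real.exp_le_exp]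
  have := mul_le_mul_of_nonneg_left (mul_log_bound hρ0 hρ1)
    (mul_nonneg hp0.le (Nat.cast_nonneg (α := ℝ) w))
  linarith

lemma geom_exp_sum_le {c : ℝ} (hc : 0 < c) (n : ℕ) :
    ∑ w ∈ Finset.range n, Real.exp (-c) ^ w ≤ 1 + 1 / c := by
  have hlt : Real.exp (-c) < 1 := by rw [Real.exp_lt_one_iff]; linarith
  have hsum := (summable_geometric_of_lt_one (Real.exp_pos _).le hlt).sum_le_tsum
    (Finset.range n) fun w _ => pow_nonneg (Real.exp_pos (-c)).le w
  rw [tsum_geometric_of_lt_one (Real.exp_pos _).le hlt] at hsum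
  refine hsum.trans ?_
  -- Equivalent to `exp (-c) ≤ 1 / (1 + c)`, i.e. to `1 + c ≤ exp c`.
  have h1 : Real.exp (-c) * (1 + c) ≤ 1 := by
    have h := mul_le_mul_of_nonneg_left (Real.add_one_le_exp c) (Real.exp_pos (-c)).le
    rw [← Real.exp_add, neg_add_cancel, Real.exp_zero] at h
    linarith
  rw [inv_le_iff_one_le_mul₀ (by linarith), show 1 + 1 / c = (1 + c) / c by field_simp; ring,
    div_mul_eq_mul_div, le_div_iff₀ hc]
  linarith

/-- Probabilistic core of Lemma 1: if `X_1, X_2, …` take values in `{0,1}`, are adapted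
to a filtration `ℱ`, and `E[X_w | ℱ_{w-1}] ≥ p` a.s. for every `w ≥ 1`, then for every
natural number `T`, `∑_{w=0}^{T} P(∑_{v=1}^{w} X_v ≤ (1-ρ) p w) ≤ 1 + 2/(ρ² p)`. -/
theorem stmt_1 {Ω : Type*} {m0 : MeasurableSpace Ω} (P : Measure Ω) [IsProbabilityMeasure P]
    (ℱ : Filtration ℕ m0) (X : ℕ → Ω → ℝ) (hadapted : Adapted ℱ X)
    (p : ℝ) (hp0 : 0 < p) (hp1 : p ≤ 1) (ρ : ℝ) (hρ0 : 0 < ρ) (hρ1 : ρ < 1)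
    (hbool : ∀ w ω, X w ω = 0 ∨ X w ω = 1)
    (hcond : ∀ w, 1 ≤ w → (fun _ => p) ≤ᵐ[P] P[X w | ℱ (w - 1)])
    (T : ℕ) :
    ∑ w ∈ Finset.range (T + 1),
        (P {ω | ∑ v ∈ Finset.Icc 1 w, X v ω ≤ (1 - ρ) * p * w}).toReal ≤
      1 + 2 / (ρ ^ 2 * p) := by
  have hc : 0 < ρ ^ 2 * p / 2 := by positivity
  calc _ ≤ ∑ w ∈ Finset.range (T + 1), Real.exp (-(ρ ^ 2 * p / 2)) ^ w :=
        Finset.sum_le_sum fun w _ =>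
          tail_bound P ℱ X hadapted p hp0 hp1 ρ hρ0 hρ1 hbool hcond w
    _ ≤ 1 + 1 / (ρ ^ 2 * p / 2) := geom_exp_sum_le hc (T + 1)
    _ = 1 + 2 / (ρ ^ 2 * p) := by rw [one_div_div]
end

section
/- Let n be a positive integer and let x, y ∈ [0,1]^n. Then |∏_{k=1}^{n} (1 − x_k) − ∏_{k=1}^{n} (1 − y_k)| ≤ ∑_{k=1}^{n} (∏_{k'=1}^{k−1} (1 − x_{k'})) · |x_k − y_k|, where the empty product ∏_{k'=1}^{0} (1 − x_{k'}) equals 1. -/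
open Finset

/-!
Peel off the last factor by induction on the length. With `P`, `Q` the products over the first
`n` indices and `a`, `b` the last entries of `x`, `y`,
`P (1 - a) - Q (1 - b) = (P - Q) (1 - b) + P (b - a)`.
The first term is at most `|P - Q|`, since `1 - b ∈ [0, 1]`, and is bounded by the induction
hypothesis; the second is, in absolute value, the last summand, since `P ≥ 0`.
-/

/-- The inequality for every length, including zero, where the induction starts. -/
lemma abs_prod_one_sub_sub_le (n : ℕ) (x y : Fin n → ℝ)
    (hx : ∀ k, x k ∈ Set.Icc (0 : ℝ) 1) (hy : ∀ k, y k ∈ Set.Icc (0 : ℝ) 1) :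
    |(∏ k, (1 - x k)) - ∏ k, (1 - y k)| ≤
      ∑ k, (∏ k' ∈ Finset.Iio k, (1 - x k')) * |x k - y k| := by
  induction n with
  | zero => simp
  | succ n ih =>
    have h := ih (fun k => x k.castSucc) (fun k => y k.castSucc) (fun k => hx _) (fun k => hy _)
    have hP : 0 ≤ ∏ k : Fin n, (1 - x k.castSucc) :=
      Finset.prod_nonneg fun k _ => sub_nonneg.2 (hx _).2
    have hlast : ∏ k' ∈ Finset.Iio (Fin.last n), (1 - x k') =
        ∏ k : Fin n, (1 - x k.castSucc) := by
      rw [Fin.Iio_last_eq_map, Finset.prod_map]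
      rfl
    have hcast (k : Fin n) : ∏ k' ∈ Finset.Iio k.castSucc, (1 - x k') =
        ∏ k' ∈ Finset.Iio k, (1 - x k'.castSucc) := by
      rw [← Fin.map_castSuccEmb_Iio, Finset.prod_map]
      rfl
    rw [Fin.prod_univ_castSucc, Fin.prod_univ_castSucc, Fin.sum_univ_castSucc, hlast]
    simp only [hcast]
    obtain ⟨hb0, hb1⟩ := hy (Fin.last n)
    generalize (∏ k : Fin n, (1 - x k.castSucc)) = P at *
    generalize (∏ k : Fin n, (1 - y k.castSucc)) = Q at *
    generalize x (Fin.last n) = a at *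
    generalize y (Fin.last n) = b at *
    calc |P * (1 - a) - Q * (1 - b)| = |(P - Q) * (1 - b) + P * (b - a)| := by ring_nf
      _ ≤ |(P - Q) * (1 - b)| + |P * (b - a)| := abs_add_le _ _
      _ = |P - Q| * (1 - b) + P * |a - b| := by
        rw [abs_mul, abs_mul, abs_of_nonneg hP, abs_of_nonneg (sub_nonneg.2 hb1),
          abs_sub_comm b a]
      _ ≤ _ := by
        gcongr
        exact (mul_le_of_le_one_right (abs_nonneg _) (by linarith)).trans h

/-- TPM Lipschitz continuity (Assumption 4 with `B' = 1`) for the disjunctive cascading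
bandit problem: `|∏_k (1 − x_k) − ∏_k (1 − y_k)| ≤ ∑_k (∏_{k' < k} (1 − x_{k'})) |x_k − y_k|`. -/
theorem stmt_6 (n : ℕ) (hn : 0 < n) (x y : Fin n → ℝ)
    (hx : ∀ k, x k ∈ Set.Icc (0 : ℝ) 1) (hy : ∀ k, y k ∈ Set.Icc (0 : ℝ) 1) :
    |(∏ k, (1 - x k)) - ∏ k, (1 - y k)| ≤
      ∑ k, (∏ k' ∈ Finset.Iio k, (1 - x k')) * |x k - y k| :=
  abs_prod_one_sub_sub_le n x y hx hy
end

section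
/- Let m and T be positive integers, let c ≥ 0 be a real number, let A_1, …, A_T be subsets of {1,…,m}, and let j : {1,…,T} × {1,…,m} → ℤ_{≥1} assign a positive-integer label to each round–arm pair. For i ∈ {1,…,m}, a label value ℓ ∈ ℤ_{≥1}, and t ∈ {1,…,T}, let M_{i,ℓ}(t) = |{τ ∈ {1,…,t−1} : i ∈ A_τ and j(τ,i) = ℓ}|. Define, for i ∈ A_t, the quantity f(i,t) = 2^{−j(t,i)} if M_{i,j(t,i)}(t) = 0, and f(i,t) = min{2^{−j(t,i)}, √(c · 2^{−j(t,i)} / M_{i,j(t,i)}(t))} otherwise. Then ∑_{t=1}^{T} ∑_{i ∈ A_t} f(i,t) ≤ m (1 + 2(1 + √2) √(c T)). -/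
open Finset

/-!
After exchanging the two sums it suffices to bound, for each arm `i`, the sum of `f i t` over the
rounds with `i ∈ A t` by `1 + 2 (1 + √2) √(c T)`. Group these rounds by label `ℓ`. Within one
group, `M i ℓ t` is the rank of `t` in the group, so it runs through `0, 1, …, N - 1` exactly once
(`sum_rank`). The rank-`0` round contributes `2^{-ℓ}`, and the others at most
`√(c 2^{-ℓ}) ∑_{w < N} 1/√w ≤ 2 √(c 2^{-ℓ}) √T` (`sum_inv_sqrt_le`). Summing over `ℓ ≥ 1` gives two
geometric series, of ratios `1/2` and `1/√2`, bounded by `1` and `1 + √2` (`geom_sum_succ_le`).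
-/

/-- The rank of an element in a finite linearly ordered set `S` is a bijection
from `S` to `{0, …, #S - 1}`. -/
lemma sum_rank {α : Type*} [LinearOrder α] (g : ℕ → ℝ) (S : Finset α) :
    ∑ t ∈ S, g (S.filter (· < t)).card = ∑ k ∈ range S.card, g k := by
  induction S using Finset.induction_on_max with
  | empty => simp
  | insert a s hlt ih =>
    have ha : a ∉ s := fun h => lt_irrefl _ (hlt a h)
    rw [sum_insert ha, card_insert_of_notMem ha, sum_range_succ, ← ih, add_comm]
    congr 1
    · refine sum_congr rfl fun t ht => ?_
      rw [filter_insert, if_neg (not_lt.2 (hlt t ht).le)]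
    · rw [filter_insert, if_neg (lt_irrefl a), filter_true_of_mem hlt]

lemma sum_inv_sqrt_le (n : ℕ) :
    ∑ k ∈ range n, 1 / Real.sqrt ((k : ℝ) + 1) ≤ 2 * Real.sqrt n := by
  induction n with
  | zero => simp
  | succ n ih =>
    rw [sum_range_succ]
    have h1 : 0 < Real.sqrt ((n : ℝ) + 1) := Real.sqrt_pos.2 (by positivity)
    have h2 : Real.sqrt ((n : ℝ) + 1) ^ 2 = n + 1 := Real.sq_sqrt (by positivity)
    have h3 : Real.sqrt (n : ℝ) ^ 2 = n := Real.sq_sqrt (by positivity)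
    have h : 1 / Real.sqrt ((n : ℝ) + 1) ≤ 2 * Real.sqrt ((n : ℝ) + 1) - 2 * Real.sqrt n := by
      rw [div_le_iff₀ h1]
      nlinarith [sq_nonneg (Real.sqrt ((n : ℝ) + 1) - Real.sqrt n)]
    push_cast
    linarith

lemma geom_sum_succ_le (q : ℝ) (h0 : 0 ≤ q) (h1 : q < 1) (n : ℕ) :
    ∑ k ∈ range n, q ^ (k + 1) ≤ q / (1 - q) := by
  rw [le_div_iff₀ (by linarith)]
  have h : (∑ k ∈ range n, q ^ (k + 1)) * (1 - q) = q - q ^ (n + 1) := by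
    induction n with
    | zero => simp
    | succ n ih => rw [sum_range_succ, add_mul, ih]; ring
  have : 0 ≤ q ^ (n + 1) := by positivity
  linarith

/-- The contribution of one label group with `n ≤ T` rounds, where `x` stands for `2^{-ℓ}`. -/
lemma group_le (c x : ℝ) (hx : 0 ≤ x) (n T : ℕ) (hn : n ≤ T) :
    ∑ k ∈ range n, (if k = 0 then x else min x (Real.sqrt (c * x / (k : ℝ))))
      ≤ x + 2 * Real.sqrt (c * x) * Real.sqrt T := by
  cases n with
  | zero => simp only [range_zero, sum_empty]; positivity
  | succ n =>
    rw [sum_range_succ', if_pos rfl, add_comm]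
    gcongr
    calc _ ≤ ∑ k ∈ range n, Real.sqrt (c * x) * (1 / Real.sqrt ((k : ℝ) + 1)) := by
          refine sum_le_sum fun k _ => ?_
          rw [if_neg (Nat.succ_ne_zero k)]
          refine (min_le_right _ _).trans_eq ?_
          rw [Real.sqrt_div' _ (by positivity)]
          push_cast
          ring
      _ ≤ Real.sqrt (c * x) * (2 * Real.sqrt n) := by
          rw [← mul_sum]
          exact mul_le_mul_of_nonneg_left (sum_inv_sqrt_le n) (Real.sqrt_nonneg _)
      _ ≤ Real.sqrt (c * x) * (2 * Real.sqrt T) := by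
          have : (n : ℝ) ≤ T := by exact_mod_cast (Nat.le_succ n).trans hn
          gcongr
      _ = _ := by ring

/-- Deterministic counting bound at the core of the proof of Theorem 3 (Bayesian regret
under TPM Lipschitz continuity), using triggering probability groups: with
`M_{i,ℓ}(t)` the number of earlier rounds `τ` with `i ∈ A_τ` and label `j(τ,i) = ℓ`, and
`f(i,t) = 2^{-j(t,i)}` if `M_{i,j(t,i)}(t) = 0` and
`f(i,t) = min{2^{-j(t,i)}, √(c 2^{-j(t,i)} / M_{i,j(t,i)}(t))}` otherwise,
`∑_{t=1}^{T} ∑_{i ∈ A_t} f(i,t) ≤ m (1 + 2(1 + √2) √(c T))`. -/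
theorem stmt_10 (m T : ℕ) (hm : 0 < m) (hT : 0 < T) (c : ℝ) (hc : 0 ≤ c)
    (A : Fin T → Finset (Fin m))
    (j : Fin T → Fin m → ℕ) (hj : ∀ t i, 1 ≤ j t i)
    (M : Fin m → ℕ → Fin T → ℕ)
    (hM : ∀ i ℓ t, M i ℓ t = ((Finset.Iio t).filter (fun τ => i ∈ A τ ∧ j τ i = ℓ)).card)
    (f : Fin m → Fin T → ℝ)
    (hf : ∀ i t, f i t =
      if M i (j t i) t = 0 then (2 : ℝ) ^ (-(j t i : ℤ))
      else min ((2 : ℝ) ^ (-(j t i : ℤ)))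
        (Real.sqrt (c * (2 : ℝ) ^ (-(j t i : ℤ)) / (M i (j t i) t)))) :
    ∑ t, ∑ i ∈ A t, f i t ≤ m * (1 + 2 * (1 + Real.sqrt 2) * Real.sqrt (c * T)) := by
  have hr0 : 0 ≤ Real.sqrt (1 / 2) := Real.sqrt_nonneg _
  have hr2 : Real.sqrt (1 / 2) ^ 2 = 1 / 2 := Real.sq_sqrt (by norm_num)
  have hr1 : Real.sqrt (1 / 2) < 1 := by nlinarith
  have hgeom : Real.sqrt (1 / 2) / (1 - Real.sqrt (1 / 2)) = 1 + Real.sqrt 2 := by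
    have h2 : Real.sqrt 2 * Real.sqrt (1 / 2) = 1 := by
      rw [← Real.sqrt_mul (by norm_num)]; norm_num
    have h22 : Real.sqrt 2 ^ 2 = 2 := Real.sq_sqrt (by norm_num)
    have h3 : Real.sqrt 2 = 2 * Real.sqrt (1 / 2) := by
      linear_combination (-2 * Real.sqrt 2) * hr2 + 2 * Real.sqrt (1 / 2) * h2
    rw [div_eq_iff (by linarith)]
    linear_combination h2 - h3
  have hswap : ∑ t, ∑ i ∈ A t, f i t
      = ∑ i, ∑ t ∈ univ.filter (fun t => i ∈ A t), f i t := by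
    simp_rw [sum_filter]
    rw [sum_comm]
    simp
  rw [hswap]
  suffices h : ∀ i, ∑ t ∈ univ.filter (fun t => i ∈ A t), f i t
      ≤ 1 + 2 * (1 + Real.sqrt 2) * Real.sqrt (c * T) by
    refine (sum_le_sum fun i _ => h i).trans_eq ?_
    rw [sum_const, card_univ, Fintype.card_fin, nsmul_eq_mul]
  intro i
  set N := univ.sup (fun t => j t i) with hN
  -- Labels are at least `1`, so `j t i - 1` below is a genuine subtraction.
  have hmaps : ∀ t ∈ univ.filter (fun t => i ∈ A t), j t i - 1 ∈ range N := by
    intro t _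
    have h1 : j t i ≤ N := le_sup (f := fun t => j t i) (mem_univ t)
    have h2 := hj t i
    rw [mem_range]
    omega
  rw [← sum_fiberwise_of_maps_to hmaps]
  have hgroup : ∀ k ∈ range N,
      ∑ t ∈ (univ.filter (fun t => i ∈ A t)).filter (fun t => j t i - 1 = k), f i t
        ≤ (1 / 2 : ℝ) ^ (k + 1)
          + 2 * Real.sqrt (c * T) * Real.sqrt (1 / 2) ^ (k + 1) := by
    intro k _
    set S := (univ.filter (fun t => i ∈ A t)).filter (fun t => j t i - 1 = k) with hS
    have hmem : ∀ t, t ∈ S ↔ i ∈ A t ∧ j t i = k + 1 := by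
      intro t
      have := hj t i
      simp only [hS, mem_filter, mem_univ, true_and]
      refine and_congr_right fun _ => ?_
      omega
    have hpow : (2 : ℝ) ^ (-((k + 1 : ℕ) : ℤ)) = (1 / 2) ^ (k + 1) := by
      rw [zpow_neg, zpow_natCast, one_div, inv_pow]
    let g : ℕ → ℝ := fun n => if n = 0 then (1 / 2 : ℝ) ^ (k + 1)
      else min ((1 / 2 : ℝ) ^ (k + 1)) (Real.sqrt (c * (1 / 2) ^ (k + 1) / (n : ℝ)))
    have hterm : ∀ t ∈ S, f i t = g (S.filter (· < t)).card := by
      intro t ht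
      have hjt := ((hmem t).1 ht).2
      have hcard : M i (k + 1) t = (S.filter (· < t)).card := by
        rw [hM]
        congr 1
        ext τ
        simp only [mem_filter, mem_Iio, hmem]
        tauto
      rw [hf, hjt, hcard, hpow]
    rw [sum_congr rfl hterm, sum_rank g S]
    refine (group_le c _ (by positivity) S.card T ?_).trans_eq ?_
    · simpa using card_le_univ S
    · have hs : Real.sqrt ((1 / 2 : ℝ) ^ (k + 1)) = Real.sqrt (1 / 2) ^ (k + 1) := by
        rw [Real.sqrt_eq_iff_mul_self_eq (by positivity) (by positivity), ← mul_pow, ← sq, hr2]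
      rw [Real.sqrt_mul hc, Real.sqrt_mul hc, hs]
      ring
  refine (sum_le_sum hgroup).trans ?_
  rw [sum_add_distrib, ← mul_sum]
  have e1 := geom_sum_succ_le (1 / 2) (by norm_num) (by norm_num) N
  rw [show (1 / 2 : ℝ) / (1 - 1 / 2) = 1 by norm_num] at e1
  have e2 := geom_sum_succ_le _ hr0 hr1 N
  rw [hgeom] at e2
  have e3 := mul_le_mul_of_nonneg_left e2
    (by positivity : 0 ≤ 2 * Real.sqrt (c * T))
  linarith
end
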